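/- arXiv:math/0302003 — 3 statements merged into one kernel-verified Lean document; each statement's English description precedes it below -/
import Mathlib

section
/- Let k be a commutative ring, B a commutative k-algebra, H a k-bialgebra, and A a B-algebra (so B maps centrally into A) which is also a right H-comodule algebra with B-linear coaction. Assume A is faithfully flat as a k-module and that the Galois map β_A : A ⊗_B A → A ⊗_k H, β_A(x ⊗ y) = x·y₍₀₎ ⊗ y₍₁₎, is bijective. Then H is a Hopf algebra, i.e. the bialgebra H admits an antipode. -/
open scoped TensorProduct

/-- The Galois map `A ⊗ A → A ⊗ H`, `x ⊗ y ↦ x·y₍₀₎ ⊗ y₍₁₎`, associated to a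
coaction-like linear map `δ : A → A ⊗ H`. -/
noncomputable def coactionGalois (k A H : Type) [CommRing k] [Ring A] [Algebra k A]
    [AddCommGroup H] [Module k H] (δ : A →ₗ[k] A ⊗[k] H) :
    (A ⊗[k] A) →ₗ[k] A ⊗[k] H :=
  LinearMap.rTensor H (LinearMap.mul' k A) ∘ₗ
    (TensorProduct.assoc k A A H).symm.toLinearMap ∘ₗ LinearMap.lTensor A δ

/-- The Galois map of a bialgebra over itself. -/
noncomputable def bialgCan (k H : Type) [CommRing k] [Ring H] [Bialgebra k H] :
    (H ⊗[k] H) →ₗ[k] H ⊗[k] H :=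
  TensorProduct.lift ((LinearMap.mul k (H ⊗[k] H)).compl₁₂
    (Algebra.TensorProduct.includeLeft : H →ₐ[k] H ⊗[k] H).toLinearMap
    (Coalgebra.comul (R := k) (A := H)))

theorem bialgCan_tmul (k H : Type) [CommRing k] [Ring H] [Bialgebra k H] (a b : H) :
    bialgCan k H (a ⊗ₜ b) = (a ⊗ₜ[k] (1 : H)) * Coalgebra.comul (R := k) b := by
  simp [bialgCan]

/-- `id ⊗ ε`. -/
noncomputable def bialgE (k H : Type) [CommRing k] [Ring H] [Bialgebra k H] :
    (H ⊗[k] H) →ₗ[k] H :=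
  (TensorProduct.rid k H).toLinearMap ∘ₗ LinearMap.lTensor H (Coalgebra.counit (R := k) (A := H))

theorem bialgE_tmul (k H : Type) [CommRing k] [Ring H] [Bialgebra k H] (a b : H) :
    bialgE k H (a ⊗ₜ b) = Coalgebra.counit (R := k) b • a := by
  simp [bialgE]

theorem bialgE_mul (k H : Type) [CommRing k] [Ring H] [Bialgebra k H] (a : H) (w : H ⊗[k] H) :
    bialgE k H ((a ⊗ₜ 1) * w) = a * bialgE k H w := by
  induction w with
  | zero => simp
  | add x y hx hy => simp [mul_add, hx, hy]
  | tmul x y => simp [bialgE_tmul]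

theorem bialgE_comul (k H : Type) [CommRing k] [Ring H] [Bialgebra k H] (b : H) :
    bialgE k H (Coalgebra.comul (R := k) b) = b := by
  simp [bialgE]

theorem bialgE_can (k H : Type) [CommRing k] [Ring H] [Bialgebra k H] (w : H ⊗[k] H) :
    bialgE k H (bialgCan k H w) = LinearMap.mul' k H w := by
  induction w with
  | zero => simp
  | add x y hx hy => simp [hx, hy]
  | tmul x y => simp [bialgCan_tmul, bialgE_mul, bialgE_comul]

theorem bialgCan_mul (k H : Type) [CommRing k] [Ring H] [Bialgebra k H] (a : H) (w : H ⊗[k] H) :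
    bialgCan k H ((a ⊗ₜ 1) * w) = (a ⊗ₜ 1) * bialgCan k H w := by
  induction w with
  | zero => simp
  | add x y hx hy => simp [mul_add, hx, hy]
  | tmul x y => simp [bialgCan_tmul, ← mul_assoc]

/-- `id ⊗ Δ`. -/
noncomputable def bialgD (k H : Type) [CommRing k] [Ring H] [Bialgebra k H] :
    (H ⊗[k] H) →ₗ[k] (H ⊗[k] H) ⊗[k] H :=
  (TensorProduct.assoc k H H H).symm.toLinearMap ∘ₗ
    LinearMap.lTensor H (Coalgebra.comul (R := k) (A := H))

theorem bialgE_D (k H : Type) [CommRing k] [Ring H] [Bialgebra k H] (w : H ⊗[k] H) :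
    LinearMap.rTensor H (bialgE k H) (bialgD k H w) = w := by
  induction w with
  | zero => simp
  | add x y hx hy => simp [hx, hy]
  | tmul x y =>
    have h : ∀ v : H ⊗[k] H, LinearMap.rTensor H (bialgE k H)
        ((TensorProduct.assoc k H H H).symm (x ⊗ₜ v)) =
        x ⊗ₜ TensorProduct.lid k H (LinearMap.rTensor H (Coalgebra.counit (R := k) (A := H)) v) := by
      intro v
      induction v with
      | zero => simp
      | add x y hx hy => simp [TensorProduct.tmul_add, hx, hy]
      | tmul a b => simp [bialgE_tmul, TensorProduct.smul_tmul]
    simp [bialgD, h]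

theorem bialgD_mul (k H : Type) [CommRing k] [Ring H] [Bialgebra k H] (a : H) (w : H ⊗[k] H) :
    bialgD k H ((a ⊗ₜ 1) * w) = ((a ⊗ₜ 1) ⊗ₜ 1) * bialgD k H w := by
  induction w with
  | zero => simp
  | add x y hx hy => simp [mul_add, hx, hy]
  | tmul x y =>
    have h : ∀ v : H ⊗[k] H, (TensorProduct.assoc k H H H).symm ((a * x) ⊗ₜ v) =
        ((a ⊗ₜ[k] (1 : H)) ⊗ₜ[k] (1 : H)) * (TensorProduct.assoc k H H H).symm (x ⊗ₜ v) := by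
      intro v
      induction v with
      | zero => simp
      | add x y hx hy => simp [TensorProduct.tmul_add, mul_add, hx, hy]
      | tmul a b => simp
    simp [bialgD, h]

theorem bialgCan_D (k H : Type) [CommRing k] [Ring H] [Bialgebra k H] (w : H ⊗[k] H) :
    LinearMap.rTensor H (bialgCan k H) (bialgD k H w) = bialgD k H (bialgCan k H w) := by
  induction w with
  | zero => simp
  | add x y hx hy => simp [hx, hy]
  | tmul x y =>
    have h : ∀ v : H ⊗[k] H, LinearMap.rTensor H (bialgCan k H)
        ((TensorProduct.assoc k H H H).symm (x ⊗ₜ v)) =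
        ((x ⊗ₜ[k] (1 : H)) ⊗ₜ[k] (1 : H)) *
          LinearMap.rTensor H (Coalgebra.comul (R := k) (A := H)) v := by
      intro v
      induction v with
      | zero => simp
      | add x y hx hy => simp [TensorProduct.tmul_add, mul_add, hx, hy]
      | tmul a b => simp [bialgCan_tmul]
    rw [bialgCan_tmul, bialgD_mul]
    simp [bialgD, h]

theorem antipode_of_can_bijective (k H : Type) [CommRing k] [Ring H] [Bialgebra k H]
    (hb : Function.Bijective (bialgCan k H)) :
    ∃ antipode : H →ₗ[k] H,
      (LinearMap.mul' k H ∘ₗ LinearMap.rTensor H antipode ∘ₗ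
          Coalgebra.comul (R := k) (A := H) =
        Algebra.linearMap k H ∘ₗ Coalgebra.counit (R := k) (A := H)) ∧
      (LinearMap.mul' k H ∘ₗ LinearMap.lTensor H antipode ∘ₗ
          Coalgebra.comul (R := k) (A := H) =
        Algebra.linearMap k H ∘ₗ Coalgebra.counit (R := k) (A := H)) := by
  let c := LinearEquiv.ofBijective (bialgCan k H) hb
  have hc : ∀ w, c w = bialgCan k H w := fun w => rfl
  have hcs : ∀ w, bialgCan k H (c.symm w) = w := fun w => c.apply_symm_apply w
  let S : H →ₗ[k] H := bialgE k H ∘ₗ c.symm.toLinearMap ∘ₗ TensorProduct.mk k H H 1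
  have hS : ∀ h, S h = bialgE k H (c.symm (1 ⊗ₜ h)) := fun h => rfl
  refine ⟨S, ?_, ?_⟩
  · ext h
    have h1 : LinearMap.rTensor H S (Coalgebra.comul (R := k) h) = c.symm (1 ⊗ₜ h) := by
      rw [← bialgE_D k H (c.symm (1 ⊗ₜ h))]
      have h2 : bialgD k H (c.symm (1 ⊗ₜ h)) =
          LinearMap.rTensor H c.symm.toLinearMap (bialgD k H (1 ⊗ₜ h)) := by
        have h3 := bialgCan_D k H (c.symm (1 ⊗ₜ h))
        rw [hcs] at h3
        rw [← h3, ← LinearMap.comp_apply, ← LinearMap.rTensor_comp]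
        have : c.symm.toLinearMap ∘ₗ bialgCan k H = LinearMap.id := by
          apply LinearMap.ext; intro w; exact c.symm_apply_apply w
        rw [this]; simp
      have h4 : bialgD k H (1 ⊗ₜ h) =
          LinearMap.rTensor H (TensorProduct.mk k H H 1) (Coalgebra.comul (R := k) h) := by
        have : ∀ v : H ⊗[k] H, (TensorProduct.assoc k H H H).symm (1 ⊗ₜ v) =
            LinearMap.rTensor H (TensorProduct.mk k H H 1) v := by
          intro v
          induction v with
          | zero => simp
          | add x y hx hy => simp [TensorProduct.tmul_add, hx, hy]
          | tmul a b => simp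
        simp [bialgD, this]
      rw [h2, h4]
      simp only [S, LinearMap.rTensor_comp, LinearMap.comp_apply]
    simp only [LinearMap.comp_apply, h1]
    rw [← bialgE_can, hcs, bialgE_tmul]
    simp [Algebra.algebraMap_eq_smul_one]
  · ext h
    have h1 : ∀ w : H ⊗[k] H, LinearMap.mul' k H (LinearMap.lTensor H S w) =
        bialgE k H (c.symm w) := by
      intro w
      induction w with
      | zero => simp
      | add x y hx hy => simp only [map_add, hx, hy]
      | tmul x y =>
        have : c.symm (x ⊗ₜ y) = (x ⊗ₜ 1) * c.symm (1 ⊗ₜ y) := by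
          rw [LinearEquiv.symm_apply_eq, hc, bialgCan_mul, hcs]
          simp
        rw [this, bialgE_mul, ← hS]
        simp
    have h2 : Coalgebra.comul (R := k) h = c (1 ⊗ₜ h) := by
      rw [hc, bialgCan_tmul, ← Algebra.TensorProduct.one_def, one_mul]
    simp only [LinearMap.comp_apply, h1]
    rw [h2, LinearEquiv.symm_apply_apply, bialgE_tmul]
    simp [Algebra.algebraMap_eq_smul_one]

theorem can_bijective_of_galois
    (k B A H : Type) [CommRing k] [CommRing B] [Algebra k B]
    [Ring A] [Algebra k A] [Algebra B A] [IsScalarTower k B A]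
    [Ring H] [Bialgebra k H] [Module.FaithfullyFlat k A]
    (δ : A →ₐ[k] A ⊗[k] H)
    (hcoassoc : (TensorProduct.assoc k A H H).toLinearMap ∘ₗ
        LinearMap.rTensor H δ.toLinearMap ∘ₗ δ.toLinearMap =
      LinearMap.lTensor A (Coalgebra.comul (R := k) (A := H)) ∘ₗ δ.toLinearMap)
    (βA : (A ⊗[B] A) →+ A ⊗[k] H)
    (hβA : ∀ x y : A, βA (x ⊗ₜ[B] y) = LinearMap.rTensor H (LinearMap.mulLeft k x) (δ y))
    (hbij : Function.Bijective βA) : Function.Bijective (bialgCan k H) := by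
  have hmul : ∀ (x : A) (w : A ⊗[k] H), LinearMap.rTensor H (LinearMap.mulLeft k x) w =
      (x ⊗ₜ 1) * w := by
    intro x w
    induction w with
    | zero => simp
    | add x y hx hy => simp only [map_add, mul_add, hx, hy]
    | tmul a b => simp
  have hβ : ∀ x y : A, βA (x ⊗ₜ[B] y) = (x ⊗ₜ 1) * δ y := fun x y => by rw [hβA, hmul]
  have hsm : ∀ (b : B) (w : A ⊗[k] H), b • w = (algebraMap B A b ⊗ₜ 1) * w := by
    intro b w
    induction w with
    | zero => simp
    | add x y hx hy => simp only [smul_add, mul_add, hx, hy]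
    | tmul a h => simp [TensorProduct.smul_tmul', Algebra.smul_def]
  let βB : (A ⊗[B] A) →ₗ[B] A ⊗[k] H :=
    { βA with
      map_smul' := by
        intro b w
        change βA (b • w) = b • βA w
        induction w with
        | zero => simp
        | add x y hx hy => simp only [smul_add, map_add, hx, hy]
        | tmul x y =>
          rw [TensorProduct.smul_tmul', hβ, hβ, hsm, ← mul_assoc]
          simp [Algebra.smul_def] }
  let e : (A ⊗[B] A) ≃ₗ[B] A ⊗[k] H := LinearEquiv.ofBijective βB hbij
  have he : ∀ x y : A, e (x ⊗ₜ y) = (x ⊗ₜ 1) * δ y := hβ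
  let ek : ((A ⊗[B] A) ⊗[k] H) ≃ₗ[B] (A ⊗[k] H) ⊗[k] H :=
    TensorProduct.AlgebraTensorModule.congr e (LinearEquiv.refl k H)
  let Φ1 : (A ⊗[B] (A ⊗[B] A)) ≃ₗ[B] (A ⊗[k] H) ⊗[k] H :=
    (TensorProduct.congr (LinearEquiv.refl B A) e) ≪≫ₗ
    (TensorProduct.AlgebraTensorModule.assoc k B B A A H).symm ≪≫ₗ ek
  let Φ2 : ((A ⊗[B] A) ⊗[B] A) ≃ₗ[B] (A ⊗[k] H) ⊗[k] H :=
    (TensorProduct.congr e (LinearEquiv.refl B A)) ≪≫ₗ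
    (TensorProduct.AlgebraTensorModule.rightComm B k B A H A) ≪≫ₗ ek ≪≫ₗ
    (TensorProduct.AlgebraTensorModule.rightComm k k B A H H)
  let G : ((A ⊗[k] H) ⊗[k] H) →ₗ[k] (A ⊗[k] H) ⊗[k] H :=
    (TensorProduct.assoc k A H H).symm.toLinearMap ∘ₗ
      LinearMap.lTensor A (bialgCan k H) ∘ₗ (TensorProduct.assoc k A H H).toLinearMap
  -- path 1
  have hP1 : ∀ x y z : A, Φ1 (x ⊗ₜ (y ⊗ₜ z)) =
      (((x ⊗ₜ 1) * δ y) ⊗ₜ 1) * LinearMap.rTensor H δ.toLinearMap (δ z) := by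
    intro x y z
    have : ∀ w : A ⊗[k] H, ek ((TensorProduct.AlgebraTensorModule.assoc k B B A A H).symm
        (x ⊗ₜ ((y ⊗ₜ 1) * w))) = (((x ⊗ₜ 1) * δ y) ⊗ₜ 1) *
        LinearMap.rTensor H δ.toLinearMap w := by
      intro w
      induction w with
      | zero => simp
      | add x y hx hy => simp only [map_add, mul_add, TensorProduct.tmul_add, hx, hy]
      | tmul a h => simp [ek, he, mul_assoc]
    rw [← this]
    simp [Φ1, he]
  -- path 2
  have hP2 : ∀ x y z : A, G (Φ2 ((x ⊗ₜ y) ⊗ₜ z)) =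
      (((x ⊗ₜ 1) * δ y) ⊗ₜ 1) * (TensorProduct.assoc k A H H).symm
        (LinearMap.lTensor A (Coalgebra.comul (R := k) (A := H)) (δ z)) := by
    intro x y z
    have h1 : ∀ u : A ⊗[k] H, G (TensorProduct.AlgebraTensorModule.rightComm k k B A H H
        (ek (TensorProduct.AlgebraTensorModule.rightComm B k B A H A (u ⊗ₜ z)))) =
        (u ⊗ₜ 1) * (TensorProduct.assoc k A H H).symm
        (LinearMap.lTensor A (Coalgebra.comul (R := k) (A := H)) (δ z)) := by
      intro u
      induction u with
      | zero => simp
      | add x y hx hy => simp only [map_add, add_mul, TensorProduct.add_tmul, hx, hy]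
      | tmul a g =>
        have h2 : ∀ w : A ⊗[k] H, G (TensorProduct.AlgebraTensorModule.rightComm k k B A H H
            (((a ⊗ₜ 1) * w) ⊗ₜ g)) = ((a ⊗ₜ g) ⊗ₜ 1) * (TensorProduct.assoc k A H H).symm
            (LinearMap.lTensor A (Coalgebra.comul (R := k) (A := H)) w) := by
          intro w
          induction w with
          | zero => simp
          | add x y hx hy => simp only [map_add, mul_add, TensorProduct.add_tmul, hx, hy]
          | tmul b h =>
            have h3 : ∀ v : H ⊗[k] H, (TensorProduct.assoc k A H H).symm
                ((a * b) ⊗ₜ ((g ⊗ₜ 1) * v)) = ((a ⊗ₜ[k] g) ⊗ₜ[k] (1 : H)) *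
                (TensorProduct.assoc k A H H).symm (b ⊗ₜ v) := by
              intro v
              induction v with
              | zero => simp
              | add x y hx hy => simp only [map_add, mul_add, TensorProduct.tmul_add, hx, hy]
              | tmul p q => simp
            simp [G, bialgCan_tmul, h3]
        rw [← h2, ← he]
        simp [ek]
    rw [← h1]
    simp [Φ2, he]
  have hcomm : ∀ w, G (Φ2 w) = Φ1 (TensorProduct.assoc B A A A w) := by
    intro w
    induction w with
    | zero => simp
    | add x y hx hy => simp only [map_add, hx, hy]
    | tmul u z =>
      induction u with
      | zero => simp
      | add x y hx hy => simp only [map_add, TensorProduct.add_tmul, hx, hy]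
      | tmul x y =>
        rw [hP2, TensorProduct.assoc_tmul, hP1]
        congr 1
        rw [LinearEquiv.symm_apply_eq]
        exact (LinearMap.congr_fun hcoassoc z).symm
  have hG : Function.Bijective G := by
    have h1 : Function.Bijective (G ∘ Φ2) := by
      have : (G ∘ Φ2) = Φ1 ∘ (TensorProduct.assoc B A A A) := funext hcomm
      rw [this]
      exact Φ1.bijective.comp (LinearEquiv.bijective _)
    exact (Function.Bijective.of_comp_iff G Φ2.bijective).1 h1
  have hl : Function.Bijective (LinearMap.lTensor A (bialgCan k H)) := by
    have h2 : Function.Bijective ((TensorProduct.assoc k A H H).symm ∘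
        (LinearMap.lTensor A (bialgCan k H) ∘ (TensorProduct.assoc k A H H))) := hG
    have h3 := (Function.Bijective.of_comp_iff' (LinearEquiv.bijective _) _).1 h2
    exact (Function.Bijective.of_comp_iff _ (LinearEquiv.bijective _)).1 h3
  exact (Module.FaithfullyFlat.lTensor_bijective_iff_bijective k A _).1 hl

/-- Let `B` be a commutative `k`-algebra, `H` a `k`-bialgebra, and `A` a
`B`-algebra which is a right `H`-comodule algebra with `B`-linear coaction.  If `A` is
faithfully flat over `k` and the Galois map `β_A : A ⊗_B A → A ⊗_k H`,
`β_A(x ⊗ y) = x·y₍₀₎ ⊗ y₍₁₎`, is bijective, then the bialgebra `H` admits an antipode,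
i.e. `H` is a Hopf algebra. -/
theorem bialgebra_admitting_galois_extension_is_hopf
    (k B A H : Type) [CommRing k] [CommRing B] [Algebra k B]
    [Ring A] [Algebra k A] [Algebra B A] [IsScalarTower k B A]
    [Ring H] [Bialgebra k H] [Module.FaithfullyFlat k A]
    (δ : A →ₐ[k] A ⊗[k] H)
    (hcoassoc : (TensorProduct.assoc k A H H).toLinearMap ∘ₗ
        LinearMap.rTensor H δ.toLinearMap ∘ₗ δ.toLinearMap =
      LinearMap.lTensor A (Coalgebra.comul (R := k) (A := H)) ∘ₗ δ.toLinearMap)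
    (hcounit : (TensorProduct.rid k A).toLinearMap ∘ₗ
        LinearMap.lTensor A (Coalgebra.counit (R := k) (A := H)) ∘ₗ δ.toLinearMap =
      LinearMap.id)
    (hBlin : ∀ b : B, δ (algebraMap B A b) = (algebraMap B A b) ⊗ₜ[k] (1 : H))
    (βA : (A ⊗[B] A) →+ A ⊗[k] H)
    (hβA : ∀ x y : A, βA (x ⊗ₜ[B] y) = LinearMap.rTensor H (LinearMap.mulLeft k x) (δ y))
    (hbij : Function.Bijective βA) :
    ∃ antipode : H →ₗ[k] H,
      (LinearMap.mul' k H ∘ₗ LinearMap.rTensor H antipode ∘ₗ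
          Coalgebra.comul (R := k) (A := H) =
        Algebra.linearMap k H ∘ₗ Coalgebra.counit (R := k) (A := H)) ∧
      (LinearMap.mul' k H ∘ₗ LinearMap.lTensor H antipode ∘ₗ
          Coalgebra.comul (R := k) (A := H) =
        Algebra.linearMap k H ∘ₗ Coalgebra.counit (R := k) (A := H)) := by
  exact antipode_of_can_bijective k H
    (can_bijective_of_galois k B A H δ hcoassoc βA hβA hbij)
end

section
/- Let k be a commutative ring and S a k-algebra which is faithfully flat as a k-module. Let M be a left S-module equipped with an S/k-descent datum D, and set ᴰM := { m ∈ M | D(m) = 1 ⊗ m }. Then for every m ∈ M the element D(m) ∈ S ⊗ M lies in the image of S ⊗ ᴰM, and the map f : S ⊗_k ᴰM → M, f(s ⊗ m) = s·m, is bijective with inverse induced by D (i.e. f(D(m)) = m for all m ∈ M and D(f(s ⊗ m)) = s ⊗ m for all s ∈ S, m ∈ ᴰM). -/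
open scoped TensorProduct

/-- The action map `S ⊗[k] M → M`, `s ⊗ m ↦ s • m`, for a left `S`-module `M`. -/
noncomputable def actionMap (k S M : Type) [CommRing k] [Ring S] [Algebra k S]
    [AddCommGroup M] [Module k M] [Module S M] [IsScalarTower k S M] :
    (S ⊗[k] M) →ₗ[k] M :=
  TensorProduct.lift ((Algebra.lsmul k (A := S) k M).toLinearMap)

/-- Faithfully flat descent: Let `S` be a `k`-algebra, faithfully flat as a
`k`-module, and `(M, D)` an `S/k`-descent datum.  With `ᴰM = { m ∈ M | D m = 1 ⊗ m }`,
every `D m` lies in the image of `S ⊗ ᴰM`, and the map `f : S ⊗ ᴰM → M`, `s ⊗ m ↦ s • m`,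
is bijective with inverse induced by `D`. -/
theorem faithfully_flat_descent (k S M : Type) [CommRing k] [Ring S] [Algebra k S]
    [Module.FaithfullyFlat k S]
    [AddCommGroup M] [Module k M] [Module S M] [IsScalarTower k S M]
    (D : M →ₗ[S] S ⊗[k] M)
    (hD1 : ∀ m : M, LinearMap.lTensor S (D.restrictScalars k) (D m) =
      LinearMap.lTensor S (TensorProduct.mk k S M 1) (D m))
    (hD2 : ∀ m : M, actionMap k S M (D m) = m) :
    (∀ m : M,
      D m ∈ LinearMap.range
        (LinearMap.lTensor S (LinearMap.ker
          ((D.restrictScalars k) - TensorProduct.mk k S M 1)).subtype)) ∧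
    Function.Bijective
      (actionMap k S M ∘ₗ
        LinearMap.lTensor S (LinearMap.ker
          ((D.restrictScalars k) - TensorProduct.mk k S M 1)).subtype) ∧
    (∀ w : S ⊗[k] ↥(LinearMap.ker ((D.restrictScalars k) - TensorProduct.mk k S M 1)),
      D ((actionMap k S M ∘ₗ
          LinearMap.lTensor S (LinearMap.ker
            ((D.restrictScalars k) - TensorProduct.mk k S M 1)).subtype) w) =
        LinearMap.lTensor S (LinearMap.ker
          ((D.restrictScalars k) - TensorProduct.mk k S M 1)).subtype w) := by
  have h3 : ∀ w : S ⊗[k] ↥(LinearMap.ker ((D.restrictScalars k) - TensorProduct.mk k S M 1)),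
      D ((actionMap k S M ∘ₗ
          LinearMap.lTensor S (LinearMap.ker
            ((D.restrictScalars k) - TensorProduct.mk k S M 1)).subtype) w) =
        LinearMap.lTensor S (LinearMap.ker
          ((D.restrictScalars k) - TensorProduct.mk k S M 1)).subtype w := by
    intro w
    induction w with
    | zero => simp only [map_zero]
    | add x y hx hy => simp only [map_add, hx, hy]
    | tmul s n =>
      have hn : D n.1 = 1 ⊗ₜ[k] n.1 := by
        have := n.2
        rw [LinearMap.mem_ker, LinearMap.sub_apply, sub_eq_zero] at this
        exact this
      have h : (actionMap k S M ∘ₗ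
          LinearMap.lTensor S (LinearMap.ker
            ((D.restrictScalars k) - TensorProduct.mk k S M 1)).subtype) (s ⊗ₜ[k] n)
            = s • n.1 := by
        simp [actionMap]
      rw [h, map_smul, hn, TensorProduct.smul_tmul', LinearMap.lTensor_tmul, smul_eq_mul, mul_one]
      rfl
  have h1 : ∀ m : M,
      D m ∈ LinearMap.range
        (LinearMap.lTensor S (LinearMap.ker
          ((D.restrictScalars k) - TensorProduct.mk k S M 1)).subtype) := by
    intro m
    have hex := Module.Flat.lTensor_exact (R := k) S
      (LinearMap.exact_subtype_ker_map ((D.restrictScalars k) - TensorProduct.mk k S M 1))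
    refine (hex (D m)).1 ?_
    rw [LinearMap.lTensor_sub, LinearMap.sub_apply, hD1, sub_self]
  refine ⟨h1, ⟨?_, ?_⟩, h3⟩
  · intro x y hxy
    apply Module.Flat.lTensor_preserves_injective_linearMap (M := S)
      (LinearMap.ker ((D.restrictScalars k) - TensorProduct.mk k S M 1)).subtype
      (Submodule.subtype_injective _)
    rw [← h3, ← h3, hxy]
  · intro m
    obtain ⟨w, hw⟩ := h1 m
    exact ⟨w, by rw [LinearMap.comp_apply, hw, hD2]⟩
end

section
/- Let k be a commutative ring, B a commutative k-algebra, H a k-bialgebra, and A a B-algebra (so B maps centrally into A) which is also a right H-comodule algebra with B-linear coaction. Assume A is faithfully flat as a k-module and that the Galois map β_A : A ⊗_B A → A ⊗_k H, β_A(x ⊗ y) = x·y₍₀₎ ⊗ y₍₁₎, is bijective. Then the map β_H : H ⊗ H → H ⊗ H, β_H(g ⊗ h) = g·h₍₁₎ ⊗ h₍₂₎, is bijective. -/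
open scoped TensorProduct

theorem rTensor_mulLeft_smul (k B A H : Type) [CommRing k] [CommRing B] [Algebra k B]
    [Ring A] [Algebra k A] [Algebra B A] [IsScalarTower k B A]
    [Ring H] [Algebra k H] (b : B) (x : A) (t : A ⊗[k] H) :
    LinearMap.rTensor H (LinearMap.mulLeft k (b • x)) t =
      b • LinearMap.rTensor H (LinearMap.mulLeft k x) t := by
  induction t using TensorProduct.induction_on with
  | zero => simp
  | add u v hu hv => rw [map_add, map_add, smul_add, hu, hv]
  | tmul a h => simp [TensorProduct.smul_tmul']

theorem rTensor_mulLeft_eq (k A H : Type) [CommRing k]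
    [Ring A] [Algebra k A] [Ring H] [Algebra k H] (x : A) (t : A ⊗[k] H) :
    LinearMap.rTensor H (LinearMap.mulLeft k x) t = (x ⊗ₜ[k] (1 : H)) * t := by
  induction t using TensorProduct.induction_on with
  | zero => simp
  | add u v hu hv => rw [map_add, mul_add, hu, hv]
  | tmul a h => simp

theorem galois_aux (k A H : Type) [CommRing k]
    [Ring A] [Algebra k A] [Ring H] [Bialgebra k H] (a : A) (h : H) (t : A ⊗[k] H) :
    TensorProduct.assoc k A H H (LinearMap.rTensor H (LinearMap.mulLeft k (a ⊗ₜ[k] h))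
        ((TensorProduct.assoc k A H H).symm
          (LinearMap.lTensor A (Coalgebra.comul (R := k) (A := H)) t))) =
      LinearMap.lTensor A (coactionGalois k H H (Coalgebra.comul (R := k) (A := H)))
        (TensorProduct.assoc k A H H (TensorProduct.rightComm k A H H
          (LinearMap.rTensor H (LinearMap.mulLeft k a) t ⊗ₜ[k] h))) := by
  induction t using TensorProduct.induction_on with
  | zero => simp
  | add u v hu hv => simp only [map_add, TensorProduct.add_tmul, hu, hv]
  | tmul c g =>
    simp only [LinearMap.lTensor_tmul, LinearMap.rTensor_tmul, LinearMap.mulLeft_apply,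
      TensorProduct.rightComm_tmul, TensorProduct.assoc_tmul, coactionGalois,
      LinearMap.comp_apply, LinearEquiv.coe_coe]
    generalize Coalgebra.comul (R := k) g = d
    induction d using TensorProduct.induction_on with
    | zero => simp
    | add u v hu hv => simp only [map_add, TensorProduct.tmul_add, hu, hv]
    | tmul p q => simp

/-- Let `B` be a commutative `k`-algebra, `H` a `k`-bialgebra, and `A` a
`B`-algebra which is a right `H`-comodule algebra with `B`-linear coaction.  If `A` is
faithfully flat over `k` and the Galois map `β_A : A ⊗_B A → A ⊗_k H`,
`β_A(x ⊗ y) = x·y₍₀₎ ⊗ y₍₁₎`, is bijective, then the map `β_H : H ⊗ H → H ⊗ H`,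
`β_H(g ⊗ h) = g·h₍₁₎ ⊗ h₍₂₎`, is bijective. -/
theorem galois_extension_implies_betaH_bijective
    (k B A H : Type) [CommRing k] [CommRing B] [Algebra k B]
    [Ring A] [Algebra k A] [Algebra B A] [IsScalarTower k B A]
    [Ring H] [Bialgebra k H] [Module.FaithfullyFlat k A]
    (δ : A →ₐ[k] A ⊗[k] H)
    (hcoassoc : (TensorProduct.assoc k A H H).toLinearMap ∘ₗ
        LinearMap.rTensor H δ.toLinearMap ∘ₗ δ.toLinearMap =
      LinearMap.lTensor A (Coalgebra.comul (R := k) (A := H)) ∘ₗ δ.toLinearMap)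
    (hcounit : (TensorProduct.rid k A).toLinearMap ∘ₗ
        LinearMap.lTensor A (Coalgebra.counit (R := k) (A := H)) ∘ₗ δ.toLinearMap =
      LinearMap.id)
    (hBlin : ∀ b : B, δ (algebraMap B A b) = (algebraMap B A b) ⊗ₜ[k] (1 : H))
    (βA : (A ⊗[B] A) →+ A ⊗[k] H)
    (hβA : ∀ x y : A, βA (x ⊗ₜ[B] y) = LinearMap.rTensor H (LinearMap.mulLeft k x) (δ y))
    (hbij : Function.Bijective βA) :
    Function.Bijective
      (coactionGalois k H H (Coalgebra.comul (R := k) (A := H))) := by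
  let e : (A ⊗[B] A) ≃ₗ[B] A ⊗[k] H := LinearEquiv.ofBijective
    ({ βA with
        map_smul' := by
          intro b t
          change βA (b • t) = b • βA t
          induction t using TensorProduct.induction_on with
          | zero => simp
          | add u v hu hv => rw [smul_add, map_add, map_add, smul_add, hu, hv]
          | tmul x y =>
            rw [TensorProduct.smul_tmul', hβA, hβA]
            exact rTensor_mulLeft_smul k B A H b x (δ y) } : (A ⊗[B] A) →ₗ[B] A ⊗[k] H) hbij
  have he : ∀ x y : A, e (x ⊗ₜ[B] y) = LinearMap.rTensor H (LinearMap.mulLeft k x) (δ y) := hβA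
  have he' : ∀ x y : A, e (x ⊗ₜ[B] y) = (x ⊗ₜ[k] (1 : H)) * δ y := by
    intro x y
    rw [he, rTensor_mulLeft_eq]
  let e1 : (A ⊗[B] A) ⊗[k] H ≃ₗ[k] (A ⊗[k] H) ⊗[k] H :=
    TensorProduct.congr (e.restrictScalars k) (LinearEquiv.refl k H)
  let P1 : (A ⊗[B] A) ⊗[B] A → A ⊗[k] (H ⊗[k] H) := fun t =>
    TensorProduct.assoc k A H H (e1 ((TensorProduct.AlgebraTensorModule.assoc k B B A A H).symm
      (TensorProduct.congr (LinearEquiv.refl B A) e (TensorProduct.assoc B A A A t))))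
  let P2 : (A ⊗[B] A) ⊗[B] A → A ⊗[k] (H ⊗[k] H) := fun t =>
    TensorProduct.assoc k A H H (TensorProduct.rightComm k A H H
      (e1 ((TensorProduct.AlgebraTensorModule.rightComm k B B A A H).symm
        (TensorProduct.congr e (LinearEquiv.refl B A) t))))
  have hP1 : Function.Bijective P1 :=
    (TensorProduct.assoc k A H H).bijective.comp (e1.bijective.comp
      ((TensorProduct.AlgebraTensorModule.assoc k B B A A H).symm.bijective.comp
        ((TensorProduct.congr (LinearEquiv.refl B A) e).bijective.comp
          (TensorProduct.assoc B A A A).bijective)))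
  have hP2 : Function.Bijective P2 :=
    (TensorProduct.assoc k A H H).bijective.comp ((TensorProduct.rightComm k A H H).bijective.comp
      (e1.bijective.comp
      ((TensorProduct.AlgebraTensorModule.rightComm k B B A A H).symm.bijective.comp
        (TensorProduct.congr e (LinearEquiv.refl B A)).bijective)))
  -- first path
  have h1 : ∀ (x y : A) (t : A ⊗[k] H),
      e1 ((TensorProduct.AlgebraTensorModule.assoc k B B A A H).symm
        (x ⊗ₜ[B] (LinearMap.rTensor H (LinearMap.mulLeft k y) t))) =
      LinearMap.rTensor H (LinearMap.mulLeft k (e (x ⊗ₜ[B] y)))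
        (LinearMap.rTensor H δ.toLinearMap t) := by
    intro x y t
    induction t using TensorProduct.induction_on with
    | zero => simp
    | add u v hu hv => simp only [map_add, TensorProduct.tmul_add, hu, hv]
    | tmul a h =>
      have : e (x ⊗ₜ[B] (y * a)) = e (x ⊗ₜ[B] y) * δ a := by
        rw [he', he', map_mul, mul_assoc]
      simp only [LinearMap.rTensor_tmul, LinearMap.mulLeft_apply,
        TensorProduct.AlgebraTensorModule.assoc_symm_tmul]
      change e (x ⊗ₜ[B] (y * a)) ⊗ₜ[k] h = (e (x ⊗ₜ[B] y) * δ a) ⊗ₜ[k] h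
      rw [this]
  have hco : ∀ z : A, LinearMap.rTensor H δ.toLinearMap (δ z) =
      (TensorProduct.assoc k A H H).symm
        (LinearMap.lTensor A (Coalgebra.comul (R := k) (A := H)) (δ z)) := by
    intro z
    rw [LinearEquiv.eq_symm_apply]
    exact LinearMap.congr_fun hcoassoc z
  -- second path
  have h2 : ∀ (w : A ⊗[k] H) (z : A),
      TensorProduct.assoc k A H H (LinearMap.rTensor H (LinearMap.mulLeft k w)
        (LinearMap.rTensor H δ.toLinearMap (δ z))) =
      LinearMap.lTensor A (coactionGalois k H H (Coalgebra.comul (R := k) (A := H)))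
        (TensorProduct.assoc k A H H (TensorProduct.rightComm k A H H
          (e1 ((TensorProduct.AlgebraTensorModule.rightComm k B B A A H).symm (w ⊗ₜ[B] z))))) := by
    intro w z
    rw [hco]
    induction w using TensorProduct.induction_on with
    | zero => simp [LinearMap.mulLeft_zero_eq_zero]
    | add u v hu hv =>
      have hm : LinearMap.mulLeft k (u + v) = LinearMap.mulLeft k u + LinearMap.mulLeft k v := by
        ext; simp [add_mul]
      rw [hm, LinearMap.rTensor_add, LinearMap.add_apply, map_add, hu, hv]
      simp only [map_add, TensorProduct.add_tmul]
    | tmul a h =>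
      rw [galois_aux]
      congr 2
      rw [TensorProduct.AlgebraTensorModule.rightComm_symm_tmul]
      change _ = TensorProduct.rightComm k A H H (e (a ⊗ₜ[B] z) ⊗ₜ[k] h)
      rw [he]
  have key : ∀ t, P1 t =
      LinearMap.lTensor A (coactionGalois k H H (Coalgebra.comul (R := k) (A := H))) (P2 t) := by
    intro t
    induction t using TensorProduct.induction_on with
    | zero => simp [P1, P2]
    | add u v hu hv =>
      have a1 : P1 (u + v) = P1 u + P1 v := by simp only [P1, map_add]
      have a2 : P2 (u + v) = P2 u + P2 v := by simp only [P2, map_add]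
      rw [a1, a2, map_add, hu, hv]
    | tmul s z =>
      induction s using TensorProduct.induction_on with
      | zero => simp [P1, P2]
      | add u v hu hv =>
        have a1 : P1 ((u + v) ⊗ₜ[B] z) = P1 (u ⊗ₜ[B] z) + P1 (v ⊗ₜ[B] z) := by
          simp only [P1, TensorProduct.add_tmul, map_add]
        have a2 : P2 ((u + v) ⊗ₜ[B] z) = P2 (u ⊗ₜ[B] z) + P2 (v ⊗ₜ[B] z) := by
          simp only [P2, TensorProduct.add_tmul, map_add]
        rw [a1, a2, map_add, hu, hv]
      | tmul x y =>
        have q1 : P1 ((x ⊗ₜ[B] y) ⊗ₜ[B] z) = TensorProduct.assoc k A H H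
            (e1 ((TensorProduct.AlgebraTensorModule.assoc k B B A A H).symm
              (x ⊗ₜ[B] e (y ⊗ₜ[B] z)))) := rfl
        rw [q1, he y z, h1, h2]
        rfl
  rw [← Module.FaithfullyFlat.lTensor_bijective_iff_bijective k A]
  have hc : Function.Bijective
      ((LinearMap.lTensor A (coactionGalois k H H (Coalgebra.comul (R := k) (A := H)))) ∘ P2) := by
    have : (LinearMap.lTensor A (coactionGalois k H H (Coalgebra.comul (R := k) (A := H)))) ∘ P2
        = P1 := funext fun t => (key t).symm
    rw [this]
    exact hP1
  exact (Function.Bijective.of_comp_iff _ hP2).mp hc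
end
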